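/- Fix an integer g ≥ 3 and a field K of characteristic zero. If every CPA-structure on the free-nilpotent Lie algebra F_{g,3} is central, then for every c ≥ 3 every CPA-structure on F_{g,c} is central. -/

import Mathlib

structure IsCPAStructure (K : Type*) {L : Type*} [CommRing K] [LieRing L] [LieAlgebra K L]
    (mul : L →ₗ[K] L →ₗ[K] L) : Prop where
  comm : ∀ x y : L, mul x y = mul y x
  bracket_mul : ∀ x y z : L, mul ⁅x, y⁆ z = mul x (mul y z) - mul y (mul x z)
  mul_bracket : ∀ x y z : L, mul x ⁅y, z⁆ = ⁅mul x y, z⁆ + ⁅y, mul x z⁆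

/-- The free-nilpotent Lie algebra \`F_{g,c}\` on \`g\` generators of nilpotency class \`c\`:
the quotient of the free Lie algebra on \`g\` generators by the \`(c+1)\`-st term \`𝔤^{c+1}\` of
its lower central series (which is \`lowerCentralSeries c\` in Mathlib's indexing). -/
abbrev FreeNilpotentLieAlgebra (K : Type*) [Field K] (g c : ℕ) :=
  FreeLieAlgebra K (Fin g) ⧸
    LieModule.lowerCentralSeries K (FreeLieAlgebra K (Fin g)) (FreeLieAlgebra K (Fin g)) c

/-!
Left multiplications `y ↦ x · y` of a CPA-structure are derivations, so they preserve the lower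
central series `γ`, and a CPA-structure on `F_{g,c+1}` descends to `F_{g,c}`. By induction on `c`
the descended structure is central, and all products on `F_{g,c+1}` lie in `γ R L k`, the term
before the center, for `k = c - 1`. It remains to push them one step deeper.

Axioms (1)–(3) give `⁅x · y, z⁆ - ⁅x · z, y⁆ = ⁅y, z⁆ · x`, which lies in `γ R L (2 k)`. Lift the
products `xᵢ · xⱼ` of generators to elements `pᵢⱼ` of the free Lie algebra. These are symmetric in
`i, j`, and `⁅pᵢⱼ, xₗ⁆` is symmetric in `j, l`, both up to deeper terms. Expand the `pᵢⱼ` into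
words in the free associative algebra, where `⁅p, x⁆ = p x - x p`. Comparing coefficients of words
that begin and end in chosen letters, three distinct letters suffice to kill all coefficients of
length at most `k + 1`.

In characteristic zero an element all of whose words are longer than `n` lies in `γ R L n`:
Dynkin's map `x₁ ⋯ xₙ ↦ ⁅x₁, ⁅x₂, …, xₙ⁆⁆` clearly sends it there, while on the free Lie algebra
this map is the Euler derivation, which is congruent to multiplication by `m + 1` on
`γ R L m / γ R L (m + 1)`.
-/

open LieModule

/-- The lower central series of a Lie algebra `L`, indexed so that `γ R L 0` is all of `L`. -/
local notation:max "γ" R:max L:max => lowerCentralSeries R L L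

section LowerCentralSeries

variable {R L M : Type*} [CommRing R] [LieRing L] [LieAlgebra R L]
  [AddCommGroup M] [Module R M] [LieRingModule L M]

theorem lie_mem_lowerCentralSeries_succ {k : ℕ} (x : L) {m : M}
    (hm : m ∈ lowerCentralSeries R L M k) : ⁅x, m⁆ ∈ lowerCentralSeries R L M (k + 1) := by
  rw [lowerCentralSeries_succ]
  exact LieSubmodule.lie_mem_lie (LieSubmodule.mem_top x) hm

variable [LieModule R L M]

theorem lowerCentralSeries_succ_le_of_lie_mem {k : ℕ} {S : Submodule R M}
    (h : ∀ x : L, ∀ m ∈ lowerCentralSeries R L M k, ⁅x, m⁆ ∈ S) :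
    (lowerCentralSeries R L M (k + 1)).toSubmodule ≤ S := by
  rw [lowerCentralSeries_succ, LieSubmodule.lieIdeal_oper_eq_linear_span', Submodule.span_le]
  rintro _ ⟨x, -, m, hm, rfl⟩
  exact h x m hm

theorem lie_mem_lowerCentralSeries_add {i j : ℕ} {a : L} {m : M}
    (ha : a ∈ γ R L i) (hm : m ∈ lowerCentralSeries R L M j) :
    ⁅a, m⁆ ∈ lowerCentralSeries R L M (i + j + 1) := by
  induction i generalizing a m j with
  | zero => simpa using lie_mem_lowerCentralSeries_succ a hm
  | succ i ih =>
    refine lowerCentralSeries_succ_le_of_lie_mem (S := (lowerCentralSeries R L M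
      (i + 1 + j + 1)).toSubmodule.comap ((toEnd R L M : L →ₗ[R] M →ₗ[R] M).flip m))
      (fun x b hb ↦ ?_) ha
    change ⁅⁅x, b⁆, m⁆ ∈ lowerCentralSeries R L M (i + 1 + j + 1)
    rw [lie_lie]
    have hxbm := lie_mem_lowerCentralSeries_succ x (ih hb hm)
    have hbxm := ih hb (lie_mem_lowerCentralSeries_succ x hm)
    rw [add_right_comm i 1 j]
    exact sub_mem hxbm hbxm

theorem derivation_mem_lowerCentralSeries_add (D : LieDerivation R L M) {j k : ℕ}
    (hD : ∀ x, D x ∈ lowerCentralSeries R L M k) {u : L} (hu : u ∈ γ R L j) :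
    D u ∈ lowerCentralSeries R L M (k + j) := by
  induction j generalizing u with
  | zero => exact hD u
  | succ j ih =>
    refine lowerCentralSeries_succ_le_of_lie_mem
      (S := (lowerCentralSeries R L M (k + (j + 1))).toSubmodule.comap (D : L →ₗ[R] M))
      (fun x m hm ↦ ?_) hu
    change D ⁅x, m⁆ ∈ lowerCentralSeries R L M (k + (j + 1))
    rw [D.apply_lie_eq_sub]
    have hmx := lie_mem_lowerCentralSeries_add hm (hD x)
    rw [add_comm j k] at hmx
    exact sub_mem (lie_mem_lowerCentralSeries_succ x (ih hm)) hmx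

theorem derivation_sub_smul_mem_lowerCentralSeries_succ {D : LieDerivation R L L}
    (hD : ∀ x, D x - x ∈ γ R L 1) {m : ℕ} {u : L} (hu : u ∈ γ R L m) :
    D u - ((m + 1 : ℕ) : R) • u ∈ γ R L (m + 1) := by
  induction m generalizing u with
  | zero => simpa using hD u
  | succ m ih =>
    refine lowerCentralSeries_succ_le_of_lie_mem
      (S := (γ R L (m + 1 + 1)).toSubmodule.comap
        ((D : L →ₗ[R] L) - ((m + 1 + 1 : ℕ) : R) • LinearMap.id)) (fun x v hv ↦ ?_) hu
    change D ⁅x, v⁆ - ((m + 1 + 1 : ℕ) : R) • ⁅x, v⁆ ∈ γ R L (m + 1 + 1)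
    have leibniz : D ⁅x, v⁆ - ((m + 1 + 1 : ℕ) : R) • ⁅x, v⁆ =
        ⁅D x - x, v⁆ + ⁅x, D v - ((m + 1 : ℕ) : R) • v⁆ := by
      rw [D.apply_lie_eq_add, sub_lie, lie_sub, lie_smul]
      push_cast
      module
    have hDx := lie_mem_lowerCentralSeries_add (hD x) hv
    rw [add_comm 1 m] at hDx
    rw [leibniz]
    exact add_mem hDx (lie_mem_lowerCentralSeries_succ x (ih hv))

theorem mem_lowerCentralSeries_of_derivation_mem [Algebra ℚ R] {D : LieDerivation R L L}
    (hD : ∀ x, D x - x ∈ γ R L 1) {k : ℕ} {u : L} (hu : D u ∈ γ R L k) : u ∈ γ R L k := by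
  induction k with
  | zero => simp
  | succ k ih =>
    have huk : u ∈ γ R L k := ih (antitone_lowerCentralSeries R L L k.le_succ hu)
    have hsmul : ((k + 1 : ℕ) : R) • u ∈ γ R L (k + 1) := by
      simpa using sub_mem hu (derivation_sub_smul_mem_lowerCentralSeries_succ hD huk)
    have hunit : IsUnit ((k + 1 : ℕ) : R) := by
      simpa using (IsUnit.mk0 ((k + 1 : ℕ) : ℚ) (by positivity)).map (algebraMap ℚ R)
    exact ((γ R L (k + 1)).toSubmodule.smul_mem_iff_of_isUnit hunit).mp hsmul

theorem map_mem_lowerCentralSeries_iff {L' : Type*} [LieRing L'] [LieAlgebra R L']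
    {f : L →ₗ⁅R⁆ L'} (hf : Function.Surjective f) {k : ℕ} (hker : f.ker ≤ γ R L k) {u : L} :
    f u ∈ γ R L' k ↔ u ∈ γ R L k := by
  rw [← LieIdeal.lowerCentralSeries_map_eq k hf]
  refine ⟨fun hu ↦ ?_, LieIdeal.mem_map⟩
  obtain ⟨⟨v, hv⟩, hvu⟩ := LieIdeal.mem_map_of_surjective hf hu
  have huv : u - v ∈ f.ker := by
    rw [LieHom.mem_ker, map_sub, sub_eq_zero]
    exact hvu.symm
  simpa using add_mem (hker huv) hv

end LowerCentralSeries

section FreeLieAlgebra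

attribute [local instance] LieRing.ofAssociativeRing

variable {R X : Type*} [CommRing R]

local notation "𝓕" => FreeLieAlgebra R X

@[elab_as_elim]
theorem freeLieAlgebra_induction {motive : 𝓕 → Prop}
    (of : ∀ x, motive (FreeLieAlgebra.of R x)) (zero : motive 0)
    (add : ∀ u v, motive u → motive v → motive (u + v))
    (smul : ∀ (r : R) u, motive u → motive (r • u))
    (lie : ∀ u v, motive u → motive v → motive ⁅u, v⁆) (u : 𝓕) : motive u := by
  let S : LieSubalgebra R 𝓕 :=
    { carrier := {u | motive u}
      add_mem' := add _ _
      zero_mem' := zero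
      smul_mem' := fun r u ↦ smul r u
      lie_mem' := lie _ _ }
  let f : 𝓕 →ₗ⁅R⁆ S := FreeLieAlgebra.lift R fun x ↦ ⟨.of R x, of x⟩
  have hf : S.incl.comp f = LieHom.id := FreeLieAlgebra.hom_ext fun x ↦ by simp [f]
  have hu : (f u : 𝓕) = u := LieHom.congr_fun hf u
  exact hu ▸ (f u).2

/-- The canonical map from the free Lie algebra to the free associative algebra, whose elements
are linear combinations of words. -/
noncomputable def wordMap : 𝓕 →ₗ⁅R⁆ MonoidAlgebra R (FreeMonoid X) :=
  FreeLieAlgebra.lift R fun x ↦ .single (.of x) 1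

theorem wordMap_of (x : X) : wordMap (FreeLieAlgebra.of R x) = .single (.of x) 1 := by
  simp [wordMap]

theorem wordMap_lie (u v : 𝓕) :
    wordMap ⁅u, v⁆ = wordMap u * wordMap v - wordMap v * wordMap u := by
  rw [LieHom.map_lie, LieRing.of_associative_ring_bracket]

/-- The combinations of words of length at least `d`, that is, the `d`-th power of the
augmentation ideal of the free associative algebra. -/
def wordFiltration (R X : Type*) [CommRing R] (d : ℕ) :
    Submodule R (MonoidAlgebra R (FreeMonoid X)) where
  carrier := {a | ∀ w : FreeMonoid X, w.length < d → a.coeff w = 0}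
  add_mem' ha hb w hw := by simp [ha w hw, hb w hw]
  zero_mem' w _ := by simp
  smul_mem' r a ha w hw := by simp [ha w hw]

theorem le_length_of_mem_support {d : ℕ} {a : MonoidAlgebra R (FreeMonoid X)}
    (ha : a ∈ wordFiltration R X d) {w : FreeMonoid X} (hw : w ∈ a.coeff.support) :
    d ≤ w.length := by
  by_contra! hlt
  exact Finsupp.mem_support_iff.mp hw (ha w hlt)

theorem mul_mem_wordFiltration {i j : ℕ} {a b : MonoidAlgebra R (FreeMonoid X)}
    (ha : a ∈ wordFiltration R X i) (hb : b ∈ wordFiltration R X j) :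
    a * b ∈ wordFiltration R X (i + j) := by
  classical
  intro w hw
  by_contra hne
  obtain ⟨p, hp, q, hq, rfl⟩ := Finset.mem_mul.mp
    (MonoidAlgebra.support_coeff_mul_subset a b (Finsupp.mem_support_iff.mpr hne))
  rw [FreeMonoid.length_mul] at hw
  have hip := le_length_of_mem_support ha hp
  have hjq := le_length_of_mem_support hb hq
  lia

theorem wordMap_mem_wordFiltration_one (u : 𝓕) : wordMap u ∈ wordFiltration R X 1 := by
  induction u using freeLieAlgebra_induction with
  | of x =>
    intro w hw
    obtain rfl : w = 1 := FreeMonoid.length_eq_zero.mp (by lia)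
    simp [wordMap_of, MonoidAlgebra.coeff_single]
  | zero => simp
  | add u v hu hv => simpa using add_mem hu hv
  | smul r u hu => simpa using Submodule.smul_mem _ r hu
  | lie u v hu hv =>
    rw [wordMap_lie]
    exact fun w hw ↦ sub_mem (mul_mem_wordFiltration hu hv) (mul_mem_wordFiltration hv hu) w
      (by lia)

theorem wordMap_mem_wordFiltration {k : ℕ} {u : 𝓕} (hu : u ∈ γ R 𝓕 k) :
    wordMap u ∈ wordFiltration R X (k + 1) := by
  induction k generalizing u with
  | zero => exact wordMap_mem_wordFiltration_one u
  | succ k ih =>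
    refine lowerCentralSeries_succ_le_of_lie_mem
      (S := (wordFiltration R X (k + 1 + 1)).comap wordMap.toLinearMap) (fun x m hm ↦ ?_) hu
    change wordMap ⁅x, m⁆ ∈ wordFiltration R X (k + 1 + 1)
    have hxm := mul_mem_wordFiltration (wordMap_mem_wordFiltration_one x) (ih hm)
    rw [add_comm 1] at hxm
    rw [wordMap_lie]
    exact sub_mem hxm (mul_mem_wordFiltration (ih hm) (wordMap_mem_wordFiltration_one x))

/-- The action `(u, t) ↦ (⁅x, u⁆ + t • x, 0)` of a letter `x` on the free Lie algebra extended by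
a vector `(0, 1)`: the letters of a word applied in turn to `(0, 1)` give its right-normed
bracket. -/
noncomputable def dynkinLetter (x : X) : Module.End R (𝓕 × R) :=
  .prod ((LieAlgebra.ad R 𝓕 (.of R x)).coprod (.toSpanSingleton R 𝓕 (.of R x))) 0

theorem dynkinLetter_apply (x : X) (u : 𝓕) (t : R) :
    dynkinLetter x (u, t) = (⁅FreeLieAlgebra.of R x, u⁆ + t • FreeLieAlgebra.of R x, 0) := by
  simp [dynkinLetter]

/-- The representation of the free associative algebra in which each letter `x` acts by
`dynkinLetter x`. -/
noncomputable def dynkinRep :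
    MonoidAlgebra R (FreeMonoid X) →ₐ[R] Module.End R (𝓕 × R) :=
  MonoidAlgebra.lift R _ _ (FreeMonoid.lift dynkinLetter)

/-- Dynkin's bracketing map, sending a word `x₁ ⋯ xₙ` to `⁅x₁, ⁅x₂, …, xₙ⁆⁆` and the empty word to
`0`. -/
noncomputable def dynkin : MonoidAlgebra R (FreeMonoid X) →ₗ[R] 𝓕 :=
  .fst R _ _ ∘ₗ .applyₗ (0, 1) ∘ₗ dynkinRep.toLinearMap

theorem dynkin_apply (a : MonoidAlgebra R (FreeMonoid X)) :
    dynkin a = (dynkinRep a (0, 1)).1 := rfl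

theorem dynkinRep_wordMap_apply (u l : 𝓕) (t : R) :
    dynkinRep (wordMap u) (l, t) = (⁅u, l⁆ + t • dynkin (wordMap u), 0) := by
  induction u using freeLieAlgebra_induction generalizing l t with
  | of x => simp [dynkin_apply, wordMap_of, dynkinRep, dynkinLetter_apply]
  | zero => simp [Prod.zero_eq_mk]
  | add u v hu hv => simp [hu, hv, add_add_add_comm]
  | smul r u hu => simp [hu, smul_comm t r]
  | lie u v hu hv =>
    have apply_lie (l : 𝓕) (t : R) : dynkinRep (wordMap ⁅u, v⁆) (l, t) =
        (⁅⁅u, v⁆, l⁆ + t • (⁅u, dynkin (wordMap v)⁆ - ⁅v, dynkin (wordMap u)⁆), 0) := by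
      rw [wordMap_lie, map_sub, map_mul, map_mul, LinearMap.sub_apply, Module.End.mul_apply,
        Module.End.mul_apply, hu, hv, hu, hv, Prod.mk_sub_mk, lie_lie, lie_add, lie_add, lie_smul,
        lie_smul, zero_smul, zero_smul, smul_sub, sub_self]
      abel_nf
    rw [apply_lie, dynkin_apply (wordMap ⁅u, v⁆), apply_lie, lie_zero, zero_add, one_smul]

theorem dynkin_wordMap_lie (u v : 𝓕) :
    dynkin (wordMap ⁅u, v⁆) = ⁅u, dynkin (wordMap v)⁆ - ⁅v, dynkin (wordMap u)⁆ := by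
  rw [dynkin_apply, wordMap_lie, map_sub, map_mul, map_mul, LinearMap.sub_apply,
    Module.End.mul_apply, Module.End.mul_apply]
  simp only [dynkinRep_wordMap_apply]
  simp

/-- The Euler derivation of the free Lie algebra, which fixes the generators. -/
noncomputable def eulerDerivation : LieDerivation R 𝓕 𝓕 where
  toLinearMap := dynkin ∘ₗ wordMap.toLinearMap
  leibniz' := dynkin_wordMap_lie

theorem eulerDerivation_apply (u : 𝓕) : eulerDerivation u = dynkin (wordMap u) := rfl

theorem eulerDerivation_of (x : X) :
    eulerDerivation (FreeLieAlgebra.of R x) = FreeLieAlgebra.of R x := by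
  simp [eulerDerivation_apply, dynkin_apply, wordMap_of, dynkinRep, dynkinLetter_apply]

theorem eulerDerivation_sub_self_mem (u : 𝓕) : eulerDerivation u - u ∈ γ R 𝓕 1 := by
  have lie_mem (a b : 𝓕) : ⁅a, b⁆ ∈ γ R 𝓕 1 :=
    lie_mem_lowerCentralSeries_succ a (k := 0) (by simp)
  induction u using freeLieAlgebra_induction with
  | of x => simp [eulerDerivation_of]
  | zero => simp
  | add u v hu hv =>
    rw [map_add, add_sub_add_comm]
    exact add_mem hu hv
  | smul r u hu =>
    rw [map_smul, ← smul_sub]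
    exact Submodule.smul_mem _ r hu
  | lie u v _ _ =>
    rw [LieDerivation.apply_lie_eq_add]
    exact sub_mem (add_mem (lie_mem _ _) (lie_mem _ _)) (lie_mem _ _)

theorem exists_dynkinLetter_word_apply_eq (x : X) (w : FreeMonoid X) :
    ∃ l ∈ γ R 𝓕 w.length, FreeMonoid.lift dynkinLetter (.of x * w) (0, 1) = (l, 0) := by
  induction w using FreeMonoid.inductionOn' generalizing x with
  | one => exact ⟨FreeLieAlgebra.of R x, by simp, by simp [dynkinLetter_apply]⟩
  | of_mul y w ih =>
    obtain ⟨l, hl, hyw⟩ := ih y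
    refine ⟨⁅FreeLieAlgebra.of R x, l⁆, ?_, ?_⟩
    · rw [FreeMonoid.length_mul, FreeMonoid.length_of, add_comm]
      exact lie_mem_lowerCentralSeries_succ _ hl
    · rw [map_mul, Module.End.mul_apply, hyw, FreeMonoid.lift_eval_of, dynkinLetter_apply]
      simp

theorem dynkin_mem_lowerCentralSeries {k : ℕ} {a : MonoidAlgebra R (FreeMonoid X)}
    (ha : a ∈ wordFiltration R X (k + 1)) : dynkin a ∈ γ R 𝓕 k := by
  rw [dynkin_apply, dynkinRep, MonoidAlgebra.lift_apply, Finsupp.sum, LinearMap.sum_apply,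
    Prod.fst_sum]
  refine sum_mem fun w hw ↦ Submodule.smul_mem _ _ ?_
  have hlen := le_length_of_mem_support ha hw
  cases w using FreeMonoid.casesOn with
  | one => simp at hlen
  | of_mul x v =>
    obtain ⟨l, hl, hxv⟩ := exists_dynkinLetter_word_apply_eq (R := R) x v
    rw [FreeMonoid.length_mul, FreeMonoid.length_of] at hlen
    rw [hxv]
    exact antitone_lowerCentralSeries R _ _ (by lia) hl

theorem mem_lowerCentralSeries_iff_wordMap_mem [Algebra ℚ R] {k : ℕ} {u : 𝓕} :
    u ∈ γ R 𝓕 k ↔ wordMap u ∈ wordFiltration R X (k + 1) :=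
  ⟨wordMap_mem_wordFiltration, fun hu ↦ mem_lowerCentralSeries_of_derivation_mem
    (D := eulerDerivation) eulerDerivation_sub_self_mem (dynkin_mem_lowerCentralSeries hu)⟩

theorem coeff_mul_single_of [DecidableEq X] (a : MonoidAlgebra R (FreeMonoid X))
    (v : FreeMonoid X) (k l : X) :
    (a * .single (.of k) 1).coeff (v * .of l) = if l = k then a.coeff v else 0 := by
  split_ifs with hlk
  · simp [hlk]
  · refine MonoidAlgebra.coeff_mul_single_of_forall_mul_ne _ _ fun p hp ↦ hlk ?_
    have hlists : p.toList ++ [k] = v.toList ++ [l] := congrArg FreeMonoid.toList hp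
    simpa [eq_comm] using (List.append_inj' hlists rfl).2

theorem coeff_single_of_mul [DecidableEq X] (a : MonoidAlgebra R (FreeMonoid X))
    (v : FreeMonoid X) (k m : X) :
    (.single (.of k) 1 * a).coeff (.of m * v) = if m = k then a.coeff v else 0 := by
  split_ifs with hmk
  · simp [hmk]
  · refine MonoidAlgebra.coeff_single_mul_of_forall_mul_ne _ _ fun p hp ↦ hmk ?_
    have hlists : k :: p.toList = m :: v.toList := congrArg FreeMonoid.toList hp
    exact (List.cons.inj hlists).1.symm

theorem coeff_wordMap_lie_of [DecidableEq X] (u : 𝓕) (v : FreeMonoid X) (k l m : X) :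
    (wordMap ⁅u, FreeLieAlgebra.of R k⁆).coeff (.of m * v * .of l) =
      (if l = k then (wordMap u).coeff (.of m * v) else 0) -
        (if m = k then (wordMap u).coeff (v * .of l) else 0) := by
  rw [wordMap_lie, wordMap_of, MonoidAlgebra.coeff_sub, Finsupp.sub_apply, coeff_mul_single_of,
    mul_assoc, coeff_single_of_mul]

theorem coeff_wordMap_one (u : 𝓕) : (wordMap u).coeff 1 = 0 :=
  wordMap_mem_wordFiltration_one u 1 (by simp)

theorem coeff_wordMap_eq_of_sub_mem {n : ℕ} {u v : 𝓕} (huv : u - v ∈ γ R 𝓕 n)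
    {w : FreeMonoid X} (hw : w.length ≤ n) :
    (wordMap u).coeff w = (wordMap v).coeff w := by
  have hcoeff := wordMap_mem_wordFiltration huv w (by lia)
  rwa [map_sub, MonoidAlgebra.coeff_sub, Finsupp.sub_apply, sub_eq_zero] at hcoeff

theorem mem_lowerCentralSeries_of_coeff_eq_zero [Algebra ℚ R] {n : ℕ} {u : 𝓕}
    (hu : ∀ m v, (FreeMonoid.of m * v).length ≤ n → (wordMap u).coeff (.of m * v) = 0) :
    u ∈ γ R 𝓕 n := by
  rw [mem_lowerCentralSeries_iff_wordMap_mem]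
  intro w hw
  cases w using FreeMonoid.casesOn with
  | one => exact coeff_wordMap_one u
  | of_mul m v => exact hu m v (by lia)

theorem mem_lowerCentralSeries_of_lie_of_mem [Algebra ℚ R] [Nontrivial X] {n : ℕ}
    {u : 𝓕} (hu : ∀ k, ⁅u, FreeLieAlgebra.of R k⁆ ∈ γ R 𝓕 (n + 1)) :
    u ∈ γ R 𝓕 n := by
  classical
  refine mem_lowerCentralSeries_of_coeff_eq_zero fun m v hmv ↦ ?_
  obtain ⟨k, hkm⟩ := exists_ne m
  have hcoeff := wordMap_mem_wordFiltration (hu k) (.of m * v * .of k)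
    (by simp only [FreeMonoid.length_mul, FreeMonoid.length_of] at hmv ⊢; lia)
  rwa [coeff_wordMap_lie_of, if_pos rfl, if_neg hkm.symm, sub_zero] at hcoeff

theorem mem_lowerCentralSeries_of_symm_of_lie_of_symm [Algebra ℚ R] (hX : 3 ≤ ENat.card X)
    {n : ℕ} {p : X → X → 𝓕}
    (hsymm : ∀ i j, p i j - p j i ∈ γ R 𝓕 n)
    (hlie : ∀ i j k, ⁅p i j, FreeLieAlgebra.of R k⁆ - ⁅p i k, FreeLieAlgebra.of R j⁆ ∈
      γ R 𝓕 (n + 1)) (i j : X) :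
    p i j ∈ γ R 𝓕 n := by
  classical
  have coeff_relation (i j k l m : X) (v : FreeMonoid X) (hv : v.length < n) :
      (if l = k then (wordMap (p i j)).coeff (.of m * v) else 0) -
        (if m = k then (wordMap (p i j)).coeff (v * .of l) else 0) =
      (if l = j then (wordMap (p i k)).coeff (.of m * v) else 0) -
        (if m = j then (wordMap (p i k)).coeff (v * .of l) else 0) := by
    rw [← coeff_wordMap_lie_of, ← coeff_wordMap_lie_of]
    exact coeff_wordMap_eq_of_sub_mem (hlie i j k)
      (by simp only [FreeMonoid.length_mul, FreeMonoid.length_of]; lia)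
  have coeff_of_ne_right {i j m : X} {v : FreeMonoid X} (hv : v.length < n) (hmj : m ≠ j) :
      (wordMap (p i j)).coeff (.of m * v) = 0 := by
    obtain ⟨k, hkm, hkj⟩ := ENat.exists_ne_ne_of_three_le hX m j
    simpa [hkm.symm, hkj, hmj] using coeff_relation i j k k m v hv
  have coeff_off_diagonal {i j : X} {w : FreeMonoid X} (hw : w.length ≤ n) (hij : i ≠ j) :
      (wordMap (p i j)).coeff w = 0 := by
    cases w using FreeMonoid.casesOn with
    | one => exact coeff_wordMap_one _
    | of_mul m v =>
      have hv : v.length < n := by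
        rw [FreeMonoid.length_mul, FreeMonoid.length_of] at hw
        lia
      obtain rfl | hmj := eq_or_ne m j
      · rw [coeff_wordMap_eq_of_sub_mem (hsymm i m) hw]
        exact coeff_of_ne_right hv hij.symm
      · exact coeff_of_ne_right hv hmj
  obtain rfl | hij := eq_or_ne i j
  · refine mem_lowerCentralSeries_of_coeff_eq_zero fun m v hmv ↦ ?_
    rw [FreeMonoid.length_mul, FreeMonoid.length_of] at hmv
    obtain rfl | hmi := eq_or_ne m i
    · obtain ⟨k, hkm, -⟩ := ENat.exists_ne_ne_of_three_le hX m m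
      have hvk : (wordMap (p m k)).coeff (v * .of k) = 0 :=
        coeff_off_diagonal (by rw [FreeMonoid.length_mul, FreeMonoid.length_of]; lia) hkm.symm
      simpa [hkm, hkm.symm, hvk] using coeff_relation m m k k m v (by lia)
    · exact coeff_of_ne_right (by lia) hmi
  · exact mem_lowerCentralSeries_of_coeff_eq_zero fun _ _ hmv ↦ coeff_off_diagonal hmv hij

end FreeLieAlgebra

/-- The largest quotient of `L` that is nilpotent of class at most `c`. For a free Lie algebra `L`
this is the free-nilpotent Lie algebra of class `c`. -/
abbrev NilpotentQuotient (R L : Type*) [CommRing R] [LieRing L] [LieAlgebra R L] (c : ℕ) :=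
  L ⧸ γ R L c

namespace NilpotentQuotient

variable {R L : Type*} [CommRing R] [LieRing L] [LieAlgebra R L] {c d k : ℕ}

variable (R c) in
/-- The quotient map, bundled as a morphism of Lie algebras. -/
def mk : L →ₗ⁅R⁆ NilpotentQuotient R L c where
  toLinearMap := (LieSubmodule.Quotient.mk' (γ R L c) : L →ₗ[R] _)
  map_lie' := rfl

theorem mk_surjective : Function.Surjective (mk R c : L →ₗ⁅R⁆ NilpotentQuotient R L c) :=
  Quot.mk_surjective

theorem mk_eq_zero_iff {u : L} : mk R c u = 0 ↔ u ∈ γ R L c :=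
  LieSubmodule.Quotient.mk_eq_zero'

theorem ker_mk : (mk R c : L →ₗ⁅R⁆ NilpotentQuotient R L c).ker = γ R L c :=
  LieSubmodule.ext _ _ fun _ ↦ mk_eq_zero_iff

theorem mk_mem_lowerCentralSeries_iff (hkc : k ≤ c) {u : L} :
    mk R c u ∈ γ R (NilpotentQuotient R L c) k ↔ u ∈ γ R L k :=
  map_mem_lowerCentralSeries_iff mk_surjective
    (ker_mk.trans_le (antitone_lowerCentralSeries R L L hkc))

theorem lowerCentralSeries_self_eq_bot : γ R (NilpotentQuotient R L c) c = ⊥ := by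
  rw [LieSubmodule.eq_bot_iff]
  intro x hx
  obtain ⟨u, rfl⟩ := mk_surjective x
  rwa [mk_eq_zero_iff, ← mk_mem_lowerCentralSeries_iff le_rfl]

/-- The projection between the nilpotent quotients of two classes. -/
def factor (h : c ≤ d) : NilpotentQuotient R L d →ₗ⁅R⁆ NilpotentQuotient R L c where
  toLinearMap := Submodule.factor (antitone_lowerCentralSeries R L L h)
  map_lie' {x y} := by
    obtain ⟨u, rfl⟩ := mk_surjective x
    obtain ⟨v, rfl⟩ := mk_surjective y
    rfl

theorem factor_mk (h : c ≤ d) (u : L) : factor h (mk R d u) = mk R c u := rfl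

theorem factor_surjective (h : c ≤ d) :
    Function.Surjective (factor h : NilpotentQuotient R L d →ₗ⁅R⁆ NilpotentQuotient R L c) :=
  .of_comp (g := mk R d) mk_surjective

theorem factor_eq_zero_iff (h : c ≤ d) {x : NilpotentQuotient R L d} :
    factor h x = 0 ↔ x ∈ γ R (NilpotentQuotient R L d) c := by
  obtain ⟨u, rfl⟩ := mk_surjective x
  rw [factor_mk, mk_eq_zero_iff, mk_mem_lowerCentralSeries_iff h]

theorem factor_mem_lowerCentralSeries_iff (h : c ≤ d) (hkc : k ≤ c)
    {x : NilpotentQuotient R L d} :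
    factor h x ∈ γ R (NilpotentQuotient R L c) k ↔ x ∈ γ R (NilpotentQuotient R L d) k :=
  map_mem_lowerCentralSeries_iff (factor_surjective h) fun _ hy ↦
    antitone_lowerCentralSeries R _ _ hkc ((factor_eq_zero_iff h).mp hy)

theorem mem_center_iff {X : Type*} [Algebra ℚ R] [Nontrivial X]
    {x : NilpotentQuotient R (FreeLieAlgebra R X) (c + 1)} :
    x ∈ LieAlgebra.center R (NilpotentQuotient R (FreeLieAlgebra R X) (c + 1)) ↔
      x ∈ γ R (NilpotentQuotient R (FreeLieAlgebra R X) (c + 1)) c := by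
  rw [mem_maxTrivSubmodule]
  refine ⟨fun hx ↦ ?_, fun hx y ↦ ?_⟩
  · obtain ⟨u, rfl⟩ := mk_surjective x
    rw [mk_mem_lowerCentralSeries_iff c.le_succ]
    refine mem_lowerCentralSeries_of_lie_of_mem fun k ↦ ?_
    rw [← mk_eq_zero_iff, LieHom.map_lie, ← lie_skew, hx, neg_zero]
  · have hyx := lie_mem_lowerCentralSeries_succ y hx
    rwa [lowerCentralSeries_self_eq_bot, LieSubmodule.mem_bot] at hyx

end NilpotentQuotient

/-- Every CPA-structure on `L` is central. -/
def AllCPACentral (R L : Type*) [CommRing R] [LieRing L] [LieAlgebra R L] : Prop :=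
  ∀ mul : L →ₗ[R] L →ₗ[R] L, IsCPAStructure R mul → ∀ x y, mul x y ∈ LieAlgebra.center R L

namespace IsCPAStructure

variable {R L : Type*} [CommRing R] [LieRing L] [LieAlgebra R L]
  {mul : L →ₗ[R] L →ₗ[R] L}

/-- Left multiplication in a CPA-structure, a derivation by axiom (3). -/
def leftMul (hmul : IsCPAStructure R mul) (x : L) : LieDerivation R L L where
  toLinearMap := mul x
  leibniz' a b := by rw [hmul.mul_bracket, ← lie_skew b]; abel

theorem mul_mem_lowerCentralSeries_add (hmul : IsCPAStructure R mul) {j k : ℕ}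
    (hmem : ∀ x y, mul x y ∈ γ R L k) (x : L) {y : L} (hy : y ∈ γ R L j) :
    mul x y ∈ γ R L (k + j) :=
  derivation_mem_lowerCentralSeries_add (hmul.leftMul x) (hmem x) hy

theorem bracket_mul_mem_lowerCentralSeries (hmul : IsCPAStructure R mul) {k : ℕ}
    (hmem : ∀ x y, mul x y ∈ γ R L k) (x y z : L) :
    mul ⁅x, y⁆ z ∈ γ R L (k + k) := by
  rw [hmul.bracket_mul]
  exact sub_mem (hmul.mul_mem_lowerCentralSeries_add hmem x (hmem y z))
    (hmul.mul_mem_lowerCentralSeries_add hmem y (hmem x z))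

theorem mul_lie_sub_mul_lie_mem_lowerCentralSeries (hmul : IsCPAStructure R mul) {k : ℕ}
    (hmem : ∀ x y, mul x y ∈ γ R L k) (x y z : L) :
    ⁅mul x y, z⁆ - ⁅mul x z, y⁆ ∈ γ R L (k + k) := by
  rw [sub_eq_add_neg, lie_skew, ← hmul.mul_bracket, hmul.comm]
  exact hmul.bracket_mul_mem_lowerCentralSeries hmem y z x

theorem exists_map_of_surjective (hmul : IsCPAStructure R mul) {L' : Type*} [LieRing L']
    [LieAlgebra R L'] {f : L →ₗ⁅R⁆ L'} (hf : Function.Surjective f)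
    (hker : ∀ x y, f y = 0 → f (mul x y) = 0) :
    ∃ mul' : L' →ₗ[R] L' →ₗ[R] L',
      IsCPAStructure R mul' ∧ ∀ x y, mul' (f x) (f y) = f (mul x y) := by
  have congr_right (x : L) {y y' : L} (h : f y = f y') : f (mul x y) = f (mul x y') := by
    rw [← sub_eq_zero, ← map_sub, ← map_sub]
    exact hker x _ (by rw [map_sub, h, sub_self])
  let s := Function.surjInv hf
  let product (a b : L') : L' := f (mul (s a) (s b))
  have product_map (x y : L) : product (f x) (f y) = f (mul x y) := calc
    f (mul (s (f x)) (s (f y)))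
      = f (mul y (s (f x))) := by
        rw [congr_right _ (Function.surjInv_eq hf (f y)), hmul.comm]
    _ = f (mul x y) := by rw [congr_right _ (Function.surjInv_eq hf (f x)), hmul.comm]
  let mul' : L' →ₗ[R] L' →ₗ[R] L' := LinearMap.mk₂ R product
    (hf.forall₃.mpr fun x y z ↦ by
      rw [← map_add, product_map, product_map, product_map, map_add, LinearMap.add_apply, map_add])
    (fun r ↦ hf.forall₂.mpr fun x y ↦ by
      rw [← map_smul, product_map, product_map, map_smul, LinearMap.smul_apply, map_smul])
    (hf.forall₃.mpr fun x y z ↦ by simp only [← map_add, product_map])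
    (fun r ↦ hf.forall₂.mpr fun x y ↦ by simp only [← map_smul, product_map])
  have mul'_map (x y : L) : mul' (f x) (f y) = f (mul x y) := product_map x y
  refine ⟨mul', ⟨hf.forall₂.mpr fun x y ↦ ?_, hf.forall₃.mpr fun x y z ↦ ?_,
    hf.forall₃.mpr fun x y z ↦ ?_⟩, mul'_map⟩
  · rw [mul'_map, mul'_map, hmul.comm]
  · simp only [← LieHom.map_lie, mul'_map, hmul.bracket_mul, map_sub]
  · simp only [← LieHom.map_lie, mul'_map, hmul.mul_bracket, map_add]

theorem mul_mem_of_forall_of_mem (hmul : IsCPAStructure R mul) {X : Type*}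
    {f : FreeLieAlgebra R X →ₗ⁅R⁆ L} (hf : Function.Surjective f) {S : Submodule R L}
    (hof : ∀ i j, mul (f (.of R i)) (f (.of R j)) ∈ S) (hlie : ∀ x y z : L, mul ⁅x, y⁆ z ∈ S)
    (x y : L) : mul x y ∈ S := by
  have left_mem {z : L} (hz : ∀ i, mul (f (.of R i)) z ∈ S) (x : L) : mul x z ∈ S := by
    obtain ⟨u, rfl⟩ := hf x
    induction u using freeLieAlgebra_induction with
    | of i => exact hz i
    | zero => simp
    | add u v hu hv => simpa using add_mem hu hv
    | smul r u hu => simpa using S.smul_mem r hu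
    | lie u v _ _ => simpa using hlie (f u) (f v) z
  refine left_mem (fun i ↦ ?_) x
  rw [hmul.comm]
  exact left_mem (fun j ↦ hof j i) y

theorem mul_mem_lowerCentralSeries_succ (hmul : IsCPAStructure R mul) [Algebra ℚ R] {X : Type*}
    (hX : 3 ≤ ENat.card X) {f : FreeLieAlgebra R X →ₗ⁅R⁆ L} (hf : Function.Surjective f) {k : ℕ}
    (hk : 2 ≤ k) (hker : f.ker ≤ γ R _ (k + 2)) (hmem : ∀ x y, mul x y ∈ γ R L k) (x y : L) :
    mul x y ∈ γ R L (k + 1) := by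
  have hker_succ : f.ker ≤ γ R _ (k + 1) :=
    hker.trans (antitone_lowerCentralSeries R _ _ (k + 1).le_succ)
  have of_mem (i j : X) : mul (f (.of R i)) (f (.of R j)) ∈ γ R L (k + 1) := by
    choose p hp using fun i j : X ↦ hf (mul (f (.of R i)) (f (.of R j)))
    rw [← hp, map_mem_lowerCentralSeries_iff hf hker_succ]
    refine mem_lowerCentralSeries_of_symm_of_lie_of_symm hX (fun i j ↦ ?_) (fun i j l ↦ ?_) i j
    · refine hker_succ (f.mem_ker.mpr ?_)
      rw [map_sub, hp, hp, hmul.comm, sub_self]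
    · rw [← map_mem_lowerCentralSeries_iff hf hker, map_sub, LieHom.map_lie, LieHom.map_lie, hp, hp]
      exact antitone_lowerCentralSeries R _ _ (by lia)
        (hmul.mul_lie_sub_mul_lie_mem_lowerCentralSeries hmem _ _ _)
  exact hmul.mul_mem_of_forall_of_mem hf (S := (γ R L (k + 1)).toSubmodule) of_mem
    (fun x y z ↦ antitone_lowerCentralSeries R _ _ (by lia)
      (hmul.bracket_mul_mem_lowerCentralSeries hmem x y z)) x y

end IsCPAStructure

theorem AllCPACentral.succ {R X : Type*} [CommRing R] [Algebra ℚ R] (hX : 3 ≤ ENat.card X) {c : ℕ}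
    (hc : 2 ≤ c) (h : AllCPACentral R (NilpotentQuotient R (FreeLieAlgebra R X) (c + 1))) :
    AllCPACentral R (NilpotentQuotient R (FreeLieAlgebra R X) (c + 2)) := by
  have : Nontrivial X := (ENat.one_lt_card_iff_nontrivial X).mp (lt_of_lt_of_le (by norm_num) hX)
  intro mul hmul x y
  let π := NilpotentQuotient.factor (R := R) (L := FreeLieAlgebra R X) (c + 1).le_succ
  obtain ⟨mul', hmul', mul'_map⟩ := hmul.exists_map_of_surjective
    (f := π) (NilpotentQuotient.factor_surjective _) fun x y hy ↦ by
      rw [NilpotentQuotient.factor_eq_zero_iff] at hy ⊢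
      simpa using hmul.mul_mem_lowerCentralSeries_add (k := 0) (by simp) x hy
  have mul_mem (x y) : mul x y ∈ γ R (NilpotentQuotient R (FreeLieAlgebra R X) (c + 2)) c := by
    rw [← NilpotentQuotient.factor_mem_lowerCentralSeries_iff (c + 1).le_succ c.le_succ,
      ← mul'_map, ← NilpotentQuotient.mem_center_iff]
    exact h mul' hmul' _ _
  rw [NilpotentQuotient.mem_center_iff]
  exact hmul.mul_mem_lowerCentralSeries_succ hX NilpotentQuotient.mk_surjective hc
    NilpotentQuotient.ker_mk.le mul_mem x y

theorem cpa_on_Fgc_central_of_Fg3_central_general {R X : Type*} [CommRing R] [Algebra ℚ R]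
    (hX : 3 ≤ ENat.card X) {b c : ℕ} (hb : 3 ≤ b) (hbc : b ≤ c)
    (h : AllCPACentral R (NilpotentQuotient R (FreeLieAlgebra R X) b)) :
    AllCPACentral R (NilpotentQuotient R (FreeLieAlgebra R X) c) := by
  induction c, hbc using Nat.le_induction with
  | base => exact h
  | succ c hbc ih =>
    obtain ⟨d, rfl⟩ : ∃ d, c = d + 1 := ⟨c - 1, by lia⟩
    exact ih.succ hX (by lia)

/-- Fix `g ≥ 3`. If every CPA-structure on `F_{g,3}` is central, then for every `c ≥ 3`
every CPA-structure on `F_{g,c}` is central (over a field of characteristic zero). -/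
theorem cpa_on_Fgc_central_of_Fg3_central (K : Type*) [Field K] [CharZero K]
    (g : ℕ) (hg : 3 ≤ g)
    (hbase : ∀ mul : FreeNilpotentLieAlgebra K g 3 →ₗ[K]
        FreeNilpotentLieAlgebra K g 3 →ₗ[K] FreeNilpotentLieAlgebra K g 3,
      IsCPAStructure K mul →
        ∀ x y : FreeNilpotentLieAlgebra K g 3,
          mul x y ∈ LieAlgebra.center K (FreeNilpotentLieAlgebra K g 3)) :
    ∀ c : ℕ, 3 ≤ c →
      ∀ mul : FreeNilpotentLieAlgebra K g c →ₗ[K]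
          FreeNilpotentLieAlgebra K g c →ₗ[K] FreeNilpotentLieAlgebra K g c,
        IsCPAStructure K mul →
          ∀ x y : FreeNilpotentLieAlgebra K g c,
            mul x y ∈ LieAlgebra.center K (FreeNilpotentLieAlgebra K g c) :=
  fun c hc ↦ cpa_on_Fgc_central_of_Fg3_central_general (by simpa using hg) le_rfl hc hbase
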